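/- Let m > 2 and n ≥ 1, and let A1, A2 be m-order n-dimensional real tensors. If the pair Ã = {A1, A2} is of type strong VP and A2 is an R-tensor, then for all q1, q2 ∈ ℝⁿ the vertical tensor complementarity problem VTCP(Ã, q̃) has a unique solution. -/

import Mathlib

open Finset

/-- For an `m`-order `n`-dimensional real tensor `A` (the first index separated, the
remaining `m-1` indices given as a function `Fin (m-1) → Fin n`),
`tProd A x i = (A x^{m-1})_i = ∑_{i2,…,im} a_{i i2 ⋯ im} x_{i2} ⋯ x_{im}`. -/
noncomputable def tProd {n k : ℕ} (A : Fin n → (Fin k → Fin n) → ℝ)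
    (x : Fin n → ℝ) : Fin n → ℝ :=
  fun i => ∑ f : Fin k → Fin n, A i f * ∏ j, x (f j)

/-- The pair `{A1, A2}` is of type strong VP: for all `x ≠ y`,
`max_i (A1 x^{m-1} − A1 y^{m-1})_i (A2 x^{m-1} − A2 y^{m-1})_i > 0`. -/
def StrongVP {n k : ℕ} (A1 A2 : Fin n → (Fin k → Fin n) → ℝ) : Prop :=
  ∀ x y : Fin n → ℝ, x ≠ y → ∃ i,
    0 < (tProd A1 x i - tProd A1 y i) * (tProd A2 x i - tProd A2 y i)

/-- `A` is an R-tensor: there is no `x ≥ 0`, `x ≠ 0` and `t ≥ 0` such that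
`(A x^{m-1})_i + t = 0` whenever `x_i > 0` and `(A x^{m-1})_j + t ≥ 0` whenever `x_j = 0`. -/
def RTensor {n k : ℕ} (A : Fin n → (Fin k → Fin n) → ℝ) : Prop :=
  ¬ ∃ (x : Fin n → ℝ) (t : ℝ), (∀ i, 0 ≤ x i) ∧ x ≠ 0 ∧ 0 ≤ t ∧
    (∀ i, 0 < x i → tProd A x i + t = 0) ∧ (∀ j, x j = 0 → 0 ≤ tProd A x j + t)

/-- `x` solves the vertical tensor complementarity problem VTCP({A1,A2},{q1,q2}):
`q1 + A1 x^{m-1} ≥ 0`, `q2 + A2 x^{m-1} ≥ 0`, and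
`(q1 + A1 x^{m-1})ᵀ (q2 + A2 x^{m-1}) = 0`. -/
def VTCPSol {n k : ℕ} (A1 A2 : Fin n → (Fin k → Fin n) → ℝ)
    (q1 q2 x : Fin n → ℝ) : Prop :=
  (∀ i, 0 ≤ q1 i + tProd A1 x i) ∧ (∀ i, 0 ≤ q2 i + tProd A2 x i) ∧
    ∑ i, (q1 i + tProd A1 x i) * (q2 i + tProd A2 x i) = 0

/-!
The solutions of the problem are the zeros of the continuous map
`H x = min (q1 + A1 x^{m-1}) (q2 + A2 x^{m-1})`. The strong VP condition makes `H` injective for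
every `q1, q2`. For `q1 = q2 = 0` it is moreover positively homogeneous of degree `m - 1`, hence
bounded below by a multiple of `‖x‖ ^ (m - 1)`, and a general `H` differs from it by a bounded
amount, so `H` is proper.

A proper injective continuous self-map `f` of `ℝⁿ` is onto. If it missed a point `c`, take a smooth
approximate left inverse `P` of `f` and a radial push `ρ` from `c` onto a sphere: `P ∘ ρ ∘ f` is at
bounded distance from the identity but misses a point, against Brouwer's theorem.

Brouwer's theorem is proved as by Milnor and Rogers: for `h` of class `C¹` with compact support,
`∫ det (1 + t h' x) * q (‖x + t h x‖²)` is polynomial in `t` and, by change of variables, constant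
for small `t`, hence constant up to `t = 1`. If `x + h x` never vanished, a bump function in place
of `q`, concentrated near `0`, would make the integral vanish at `t = 1` but not at `t = 0`.
-/

section Brouwer

open MeasureTheory Filter Topology Polynomial Function Metric

theorem exists_natDegree_le_eval_eq_det_one_add_smul {R M : Type*} [CommRing R] [Nontrivial R]
    [AddCommGroup M] [Module R M] [Module.Free R M] [Module.Finite R M] (A : M →ₗ[R] M) :
    ∃ p : R[X], p.natDegree ≤ Module.finrank R M ∧ ∀ t, p.eval t = LinearMap.det (1 + t • A) := by
  let b := Module.Free.chooseBasis R M
  let B := LinearMap.toMatrix b b A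
  refine ⟨((X : R[X]) • B.map C + (1 : Matrix _ _ R).map C).det, ?_, fun t => ?_⟩
  · exact (natDegree_det_X_add_C_le B 1).trans_eq (Module.finrank_eq_card_basis b).symm
  · have hdet : LinearMap.det (1 + t • A) = (1 + t • B).det := by
      rw [← LinearMap.det_toMatrix b, map_add, map_smul, LinearMap.toMatrix_one]
    rw [hdet, ← coe_evalRingHom, RingHom.map_det]
    congr 1
    ext i j
    simp only [RingHom.mapMatrix_apply, Matrix.map_apply, Matrix.add_apply, Matrix.smul_apply,
      smul_eq_mul, coe_evalRingHom, eval_add, eval_mul, eval_X, eval_C]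
    exact add_comm _ _

theorem exists_eval_eq_sum_mul_eval_of_infinite {F : Type*} [Field F] {S : Set F}
    (hS : S.Infinite) (D : ℕ) (a : F) :
    ∃ (s : Finset F) (w : F → F), ↑s ⊆ S ∧
      ∀ p : F[X], p.natDegree ≤ D → p.eval a = ∑ t ∈ s, w t * p.eval t := by
  classical
  obtain ⟨s, hsS, hcard⟩ := hS.exists_subset_card_eq (D + 1)
  refine ⟨s, fun t => (Lagrange.basis s id t).eval a, hsS, fun p hp => ?_⟩
  have hdeg : p.degree < (#s : WithBot ℕ) := by
    rw [hcard]
    exact (degree_le_of_natDegree_le hp).trans_lt (mod_cast D.lt_succ_self)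
  conv_lhs =>
    rw [Lagrange.eq_interpolate (v := id) (Set.injOn_id _) hdeg, Lagrange.interpolate_apply,
      eval_finsetSum]
  simp [mul_comm]

-- Interpolation makes `p ↦ p.eval a` a combination of evaluations in `S`, so that the dependence
-- of the coefficients of `p x` on `x` never enters.
theorem integral_eval_eq_of_infinite {α : Type*} [MeasurableSpace α] {μ : Measure α}
    {p : α → ℝ[X]} {D : ℕ} (hdeg : ∀ x, (p x).natDegree ≤ D)
    (hintegrable : ∀ t, Integrable (fun x => (p x).eval t) μ) {S : Set ℝ} (hS : S.Infinite) {c : ℝ}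
    (hc : ∀ t ∈ S, ∫ x, (p x).eval t ∂μ = c) (a : ℝ) : ∫ x, (p x).eval a ∂μ = c := by
  obtain ⟨s, w, hsS, hw⟩ := exists_eval_eq_sum_mul_eval_of_infinite hS D a
  have hw_sum : ∑ t ∈ s, w t = 1 := by simpa using (hw 1 (by simp)).symm
  calc ∫ x, (p x).eval a ∂μ = ∫ x, ∑ t ∈ s, w t * (p x).eval t ∂μ := by
        simp only [hw _ (hdeg _)]
    _ = ∑ t ∈ s, w t * ∫ x, (p x).eval t ∂μ := by
        rw [integral_finsetSum _ fun t _ => (hintegrable t).const_mul (w t)]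
        simp only [integral_const_mul]
    _ = ∑ t ∈ s, w t * c := Finset.sum_congr rfl fun t ht => by rw [hc t (hsS ht)]
    _ = c := by rw [← Finset.sum_mul, hw_sum, one_mul]

theorem bijective_id_add_of_lipschitzWith_lt_one {E : Type*} [NormedAddCommGroup E]
    [CompleteSpace E] {h : E → E} {C : NNReal} (hh : LipschitzWith C h) (hC : C < 1) :
    Bijective fun x => x + h x := by
  have hcontr (y : E) : ContractingWith C fun x => y - h x :=
    ⟨hC, by simpa using (LipschitzWith.const y).sub hh⟩
  refine ⟨fun x y hxy => ?_, fun y => ?_⟩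
  · refine (hcontr (x + h x)).fixedPoint_unique' (add_sub_cancel_right x (h x)) ?_
    have hxy : x + h x = y + h y := hxy
    rw [hxy]
    exact add_sub_cancel_right y (h y)
  · exact ⟨_, eq_sub_iff_add_eq.1 (hcontr y).fixedPoint_isFixedPt.symm⟩

theorem image_eq_self_of_eqOn_id_compl {α : Type*} {f : α → α} (hf : Bijective f) {s : Set α}
    (hs : Set.EqOn f id sᶜ) : f '' s = s := by
  rw [← compl_inj_iff, ← Set.image_compl_eq hf, hs.image_eq, Set.image_id]

theorem eventually_forall_mem_det_id_add_smul_pos {X E : Type*} [TopologicalSpace X]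
    [NormedAddCommGroup E] [NormedSpace ℝ E] {A : X → E →L[ℝ] E} (hA : Continuous A)
    {K : Set X} (hK : IsCompact K) :
    ∀ᶠ t : ℝ in 𝓝 0, ∀ x ∈ K, 0 < (ContinuousLinearMap.id ℝ E + t • A x).det := by
  refine hK.eventually_forall_of_forall_eventually fun x _ => ?_
  have hcont : Continuous fun z : ℝ × X => (ContinuousLinearMap.id ℝ E + z.1 • A z.2).det :=
    ContinuousLinearMap.continuous_det.comp (by fun_prop)
  have hzero : (ContinuousLinearMap.id ℝ E + (0 : ℝ) • A x).det = 1 := by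
    rw [zero_smul, add_zero]
    exact LinearMap.det_id
  exact hcont.continuousAt.eventually_const_lt (one_pos.trans_eq hzero.symm)

theorem eventually_bijective_add_smul {E : Type*} [NormedAddCommGroup E] [NormedSpace ℝ E]
    [CompleteSpace E] {h : E → E} {C : NNReal} (hh : LipschitzWith C h) :
    ∀ᶠ t : ℝ in 𝓝 0, Bijective fun x => x + t • h x := by
  have hcont : Continuous fun t : ℝ => ‖t‖₊ * C := by fun_prop
  filter_upwards [hcont.continuousAt.eventually_lt_const (show ‖(0 : ℝ)‖₊ * C < 1 by simp)]
    with t ht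
  exact bijective_id_add_of_lipschitzWith_lt_one ((lipschitzWith_smul t).comp hh) ht

theorem dist_integral_mul_le {α : Type*} [MeasurableSpace α] {μ : Measure α} {w f g : α → ℝ}
    (hw : Integrable w μ) (hf : Integrable (fun x => w x * f x) μ)
    (hg : Integrable (fun x => w x * g x) μ) {δ : ℝ} (hfg : ∀ᵐ x ∂μ, |f x - g x| ≤ δ) :
    dist (∫ x, w x * f x ∂μ) (∫ x, w x * g x ∂μ) ≤ (∫ x, |w x| ∂μ) * δ := by
  rw [dist_eq_norm, ← integral_sub hf hg, ← integral_mul_const]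
  refine norm_integral_le_of_norm_le (hw.abs.mul_const δ) (hfg.mono fun x hx => ?_)
  rw [← mul_sub, norm_mul]
  exact mul_le_mul_of_nonneg_left hx (abs_nonneg _)

theorem setIntegral_mul_comp_eq_of_forall_polynomial {X : Type*} [TopologicalSpace X] [T2Space X]
    [MeasurableSpace X] [OpensMeasurableSpace X] {μ : Measure X} [IsFiniteMeasureOnCompacts μ]
    {K : Set X} (hK : IsCompact K) {w₁ w₂ u₁ u₂ : X → ℝ} (hw₁ : Continuous w₁)
    (hw₂ : Continuous w₂) (hu₁ : Continuous u₁) (hu₂ : Continuous u₂)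
    (hpoly : ∀ q : ℝ[X],
      ∫ x in K, w₁ x * q.eval (u₁ x) ∂μ = ∫ x in K, w₂ x * q.eval (u₂ x) ∂μ)
    {ψ : ℝ → ℝ} (hψ : Continuous ψ) :
    ∫ x in K, w₁ x * ψ (u₁ x) ∂μ = ∫ x in K, w₂ x * ψ (u₂ x) ∂μ := by
  obtain ⟨r₁, hr₁⟩ := hK.exists_bound_of_continuousOn hu₁.continuousOn
  obtain ⟨r₂, hr₂⟩ := hK.exists_bound_of_continuousOn hu₂.continuousOn
  set c₁ := ∫ x in K, |w₁ x| ∂μ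
  set c₂ := ∫ x in K, |w₂ x| ∂μ
  have hc : 0 < c₁ + c₂ + 1 := by positivity
  refine eq_of_forall_dist_le fun ε hε => ?_
  obtain ⟨q, hq⟩ := exists_polynomial_near_of_continuousOn (-max r₁ r₂) (max r₁ r₂) ψ
    hψ.continuousOn (ε / (c₁ + c₂ + 1)) (by positivity)
  have hclose {w u : X → ℝ} (hw : Continuous w) (hu : Continuous u)
      (hur : ∀ x ∈ K, ‖u x‖ ≤ max r₁ r₂) :
      dist (∫ x in K, w x * q.eval (u x) ∂μ) (∫ x in K, w x * ψ (u x) ∂μ)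
        ≤ (∫ x in K, |w x| ∂μ) * (ε / (c₁ + c₂ + 1)) := by
    have hintegrable {f : X → ℝ} (hf : Continuous f) : IntegrableOn f K μ :=
      hf.continuousOn.integrableOn_compact hK
    refine dist_integral_mul_le (hintegrable hw) (hintegrable (by fun_prop))
      (hintegrable (by fun_prop)) ?_
    exact ae_restrict_of_forall_mem hK.measurableSet fun x hx =>
      (hq _ (abs_le.1 (hur x hx))).le
  have h₁ := hclose hw₁ hu₁ fun x hx => (hr₁ x hx).trans (le_max_left _ _)
  have h₂ := hclose hw₂ hu₂ fun x hx => (hr₂ x hx).trans (le_max_right _ _)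
  rw [hpoly] at h₁
  calc dist (∫ x in K, w₁ x * ψ (u₁ x) ∂μ) (∫ x in K, w₂ x * ψ (u₂ x) ∂μ)
      ≤ c₁ * (ε / (c₁ + c₂ + 1)) + c₂ * (ε / (c₁ + c₂ + 1)) :=
        (dist_triangle_left _ _ _).trans (add_le_add h₁ h₂)
    _ = ε * ((c₁ + c₂) / (c₁ + c₂ + 1)) := by ring
    _ ≤ ε := mul_le_of_le_one_right hε.le ((div_le_one hc).2 (by linarith))

theorem eventually_setIntegral_det_mul_comp_add_smul {E : Type*} [NormedAddCommGroup E]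
    [NormedSpace ℝ E] [FiniteDimensional ℝ E] [MeasurableSpace E] [BorelSpace E] {μ : Measure E}
    [μ.IsAddHaarMeasure] {h : E → E} (hh : ContDiff ℝ 1 h) {K : Set E} (hK : IsCompact K)
    (hhK : support h ⊆ K) :
    ∀ᶠ t : ℝ in 𝓝 0, ∀ φ : E → ℝ,
      ∫ x in K, (ContinuousLinearMap.id ℝ E + t • fderiv ℝ h x).det * φ (x + t • h x) ∂μ
        = ∫ x in K, φ x ∂μ := by
  have hzero : ∀ x ∉ K, h x = 0 := fun x hx => notMem_support.1 fun hx' => hx (hhK hx')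
  obtain ⟨C, hC⟩ := hh.lipschitzWith_of_hasCompactSupport (.intro hK hzero) one_ne_zero
  filter_upwards [eventually_bijective_add_smul hC,
    eventually_forall_mem_det_id_add_smul_pos (hh.continuous_fderiv one_ne_zero) hK]
    with t hbij hpos φ
  have himage : (fun x => x + t • h x) '' K = K :=
    image_eq_self_of_eqOn_id_compl hbij fun x hx => by simp [hzero x hx]
  have hderiv : ∀ x ∈ K, HasFDerivWithinAt (fun x => x + t • h x)
      (ContinuousLinearMap.id ℝ E + t • fderiv ℝ h x) K x := fun x _ =>
    ((hasFDerivAt_id x).add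
      ((hh.differentiable one_ne_zero x).hasFDerivAt.const_smul t)).hasFDerivWithinAt
  conv_rhs =>
    rw [← himage, integral_image_eq_integral_abs_det_fderiv_smul μ hK.measurableSet hderiv
      hbij.injective.injOn]
  refine setIntegral_congr_fun hK.measurableSet fun x hx => ?_
  simp only [abs_of_pos (hpos x hx), smul_eq_mul]

theorem setIntegral_det_mul_eval_norm_sq_add {E : Type*} [NormedAddCommGroup E]
    [InnerProductSpace ℝ E] [FiniteDimensional ℝ E] [MeasurableSpace E] [BorelSpace E]
    {μ : Measure E} [μ.IsAddHaarMeasure] {h : E → E} (hh : ContDiff ℝ 1 h) {K : Set E}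
    (hK : IsCompact K) (hhK : support h ⊆ K) (q : ℝ[X]) :
    ∫ x in K, (ContinuousLinearMap.id ℝ E + fderiv ℝ h x).det * q.eval (‖x + h x‖ ^ 2) ∂μ
      = ∫ x in K, q.eval (‖x‖ ^ 2) ∂μ := by
  choose p hp_deg hp_eval using fun x =>
    exists_natDegree_le_eval_eq_det_one_add_smul (fderiv ℝ h x : E →ₗ[ℝ] E)
  let s (x : E) : ℝ[X] := C (‖h x‖ ^ 2) * X ^ 2 + C (2 * inner ℝ x (h x)) * X + C (‖x‖ ^ 2)
  have hs_eval (x : E) (t : ℝ) : (s x).eval t = ‖x + t • h x‖ ^ 2 := by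
    rw [norm_add_sq_real, norm_smul, inner_smul_right, mul_pow, Real.norm_eq_abs, sq_abs]
    simp only [s, eval_add, eval_mul, eval_C, eval_X, eval_pow]
    ring
  have heval (x : E) (t : ℝ) : (p x * q.comp (s x)).eval t =
      (ContinuousLinearMap.id ℝ E + t • fderiv ℝ h x).det * q.eval (‖x + t • h x‖ ^ 2) := by
    rw [eval_mul, eval_comp, hs_eval, hp_eval]
    rfl
  have hdeg (x : E) : (p x * q.comp (s x)).natDegree ≤
      Module.finrank ℝ E + q.natDegree * 2 := by
    refine natDegree_mul_le.trans (add_le_add (hp_deg x) ?_)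
    exact natDegree_comp_le.trans (Nat.mul_le_mul_left _ natDegree_quadratic_le)
  have hintegrable (t : ℝ) : IntegrableOn (fun x => (p x * q.comp (s x)).eval t) K μ := by
    simp only [heval]
    have hdet : Continuous fun x => (ContinuousLinearMap.id ℝ E + t • fderiv ℝ h x).det :=
      ContinuousLinearMap.continuous_det.comp
        (continuous_const.add ((hh.continuous_fderiv one_ne_zero).const_smul t))
    have hcont : Continuous h := hh.continuous
    exact (Continuous.mul hdet (by fun_prop)).continuousOn.integrableOn_compact hK
  have hsmall := infinite_of_mem_nhds (0 : ℝ)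
    (eventually_setIntegral_det_mul_comp_add_smul (μ := μ) hh hK hhK)
  have hone := integral_eval_eq_of_infinite hdeg hintegrable hsmall
    (fun t ht => by simpa only [heval] using ht fun y => q.eval (‖y‖ ^ 2)) 1
  simpa only [heval, one_smul] using hone

theorem exists_add_eq_zero_of_contDiff_of_hasCompactSupport {E : Type*} [NormedAddCommGroup E]
    [InnerProductSpace ℝ E] [FiniteDimensional ℝ E] {h : E → E} (hh : ContDiff ℝ 1 h)
    (hsupp : HasCompactSupport h) : ∃ x, x + h x = 0 := by
  borelize E
  by_contra! hne
  have hcont : Continuous h := hh.continuous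
  obtain ⟨R, hR, hsuppR⟩ := hsupp.isBounded.subset_closedBall_lt 0 0
  have hK : IsCompact (closedBall (0 : E) R) := isCompact_closedBall 0 R
  have hhK : support h ⊆ closedBall 0 R := (subset_tsupport h).trans hsuppR
  obtain ⟨δ, hδ, hδ_le⟩ := hK.exists_forall_le' (f := fun x => ‖x + h x‖ ^ 2)
    (by fun_prop) fun x _ => sq_pos_of_pos (norm_pos_iff.2 (hne x))
  let ψ : ℝ → ℝ := fun s => max 0 (min δ (R ^ 2) - s)
  have hψ : Continuous ψ := by fun_prop
  have hψ_zero {s : ℝ} (hs : min δ (R ^ 2) ≤ s) : ψ s = 0 := max_eq_left (sub_nonpos.2 hs)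
  have hdet : Continuous fun x => (ContinuousLinearMap.id ℝ E + fderiv ℝ h x).det :=
    ContinuousLinearMap.continuous_det.comp
      (continuous_const.add (hh.continuous_fderiv one_ne_zero))
  have hψ_outside : ∀ x ∉ closedBall (0 : E) R, ψ (‖x‖ ^ 2) = 0 := fun x hx =>
    hψ_zero ((min_le_right _ _).trans
      (pow_le_pow_left₀ hR.le (by simpa using (not_le.1 (mt mem_closedBall_zero_iff.2 hx)).le) 2))
  have hint_zero : ∫ x : E, ψ (‖x‖ ^ 2) = 0 := calc
    ∫ x : E, ψ (‖x‖ ^ 2) = ∫ x in closedBall (0 : E) R, 1 * ψ (‖x‖ ^ 2) := by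
      simp only [one_mul]
      exact (setIntegral_eq_integral_of_forall_compl_eq_zero hψ_outside).symm
    _ = ∫ x in closedBall (0 : E) R,
          (ContinuousLinearMap.id ℝ E + fderiv ℝ h x).det * ψ (‖x + h x‖ ^ 2) := by
      refine (setIntegral_mul_comp_eq_of_forall_polynomial hK hdet continuous_const
        (by fun_prop) (by fun_prop) (fun q => ?_) hψ).symm
      simpa only [one_mul] using setIntegral_det_mul_eval_norm_sq_add hh hK hhK q
    _ = 0 := setIntegral_eq_zero_of_forall_eq_zero fun x hx => by
      rw [hψ_zero ((min_le_left _ _).trans (hδ_le x hx)), mul_zero]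
  refine hint_zero.not_gt (Continuous.integral_pos_of_hasCompactSupport_nonneg_nonzero
    (x := (0 : E)) (by fun_prop) (.intro hK hψ_outside) (fun x => le_max_left _ _) ?_)
  simp [ψ, hδ, hR.ne']

variable {E : Type*} [NormedAddCommGroup E] [NormedSpace ℝ E] [FiniteDimensional ℝ E]

theorem exists_add_eq_zero_of_hasCompactSupport {h : E → E} (hh : Continuous h)
    (hsupp : HasCompactSupport h) : ∃ x, x + h x = 0 := by
  by_contra! hne
  obtain ⟨g, hg, hgh, hg_supp⟩ := hh.exists_contDiff_approx 1 (ε := fun x => ‖x + h x‖)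
    (by fun_prop) fun x => norm_pos_iff.2 (hne x)
  let e := toEuclidean (E := E)
  have hconj : HasCompactSupport fun y => e (g (e.symm y)) :=
    ((hsupp.mono hg_supp).comp_homeomorph e.symm.toHomeomorph).comp_left (map_zero e)
  obtain ⟨y, hy⟩ := exists_add_eq_zero_of_contDiff_of_hasCompactSupport
    (e.contDiff.comp (hg.comp e.symm.contDiff)) hconj
  have hzero : e.symm y + g (e.symm y) = 0 := e.injective (by simpa using hy)
  refine (hgh (e.symm y)).ne ?_
  rw [dist_comm, dist_eq_norm, ← neg_eq_of_add_eq_zero_right hzero, sub_neg_eq_add, add_comm]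

theorem exists_isFixedPt_of_isBounded_range {f : E → E} (hf : Continuous f)
    (hbdd : Bornology.IsBounded (Set.range f)) : ∃ x, IsFixedPt f x := by
  obtain ⟨r, hr⟩ := hbdd.subset_closedBall 0
  obtain ⟨χ, hχ_one, -, hχ_supp, hχ_mem⟩ := exists_continuous_one_zero_of_isCompact
    (isCompact_closedBall (0 : E) r) isClosed_empty (Set.disjoint_empty _)
  obtain ⟨x, hx⟩ := exists_add_eq_zero_of_hasCompactSupport (h := fun x => -(χ x • f x))
    (by fun_prop) hχ_supp.smul_right.neg
  rw [← sub_eq_add_neg, sub_eq_zero] at hx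
  have hfx : ‖f x‖ ≤ r := mem_closedBall_zero_iff.1 (hr ⟨x, rfl⟩)
  have hxr : x ∈ closedBall (0 : E) r := by
    rw [mem_closedBall_zero_iff, hx, norm_smul, Real.norm_of_nonneg (hχ_mem x).1]
    exact (mul_le_of_le_one_left (norm_nonneg _) (hχ_mem x).2).trans hfx
  rw [hχ_one hxr, Pi.one_apply, one_smul] at hx
  exact ⟨x, hx.symm⟩

theorem surjective_of_isBounded_range_sub_id {g : E → E} (hg : Continuous g)
    (hbdd : Bornology.IsBounded (Set.range fun x => g x - x)) : Surjective g := by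
  intro y
  have hbdd' : Bornology.IsBounded (Set.range fun x => y - (g x - x)) := by
    obtain ⟨r, hr⟩ := hbdd.exists_norm_le
    refine isBounded_iff_forall_norm_le.2 ⟨‖y‖ + r, Set.forall_mem_range.2 fun x => ?_⟩
    exact (norm_sub_le _ _).trans (add_le_add le_rfl (hr _ ⟨x, rfl⟩))
  obtain ⟨x, hx⟩ := exists_isFixedPt_of_isBounded_range (by fun_prop) hbdd'
  have hx : y - (g x - x) = x := hx
  refine ⟨x, ?_⟩
  rwa [sub_eq_iff_eq_add, add_sub_cancel, eq_comm] at hx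

end Brouwer

section ClosedEmbedding

open MeasureTheory Filter Topology Function Metric

variable {E : Type*} [NormedAddCommGroup E] [NormedSpace ℝ E]

/-- The push of the punctured ball of radius `r` about `c` radially onto its sphere; points
outside the ball are fixed. The value at `c` is the junk value `c`. -/
noncomputable def radialPush (c : E) (r : ℝ) (y : E) : E :=
  c + max (r / ‖y - c‖) 1 • (y - c)

theorem continuousOn_radialPush (c : E) (r : ℝ) : ContinuousOn (radialPush c r) {c}ᶜ := by
  have hdiv : ContinuousOn (fun y => r / ‖y - c‖) {c}ᶜ :=
    continuousOn_const.div (by fun_prop) fun y hy => norm_ne_zero_iff.2 (sub_ne_zero.2 hy)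
  unfold radialPush
  fun_prop

theorem radialPush_of_le {c y : E} {r : ℝ} (hy : r ≤ ‖y - c‖) : radialPush c r y = y := by
  rw [radialPush, max_eq_right (div_le_one_of_le₀ hy (norm_nonneg _)), one_smul,
    add_sub_cancel]

theorem radialPush_mem_sphere {c y : E} {r : ℝ} (hyc : y ≠ c) (hy : ‖y - c‖ ≤ r) :
    radialPush c r y ∈ sphere c r := by
  have hpos : 0 < ‖y - c‖ := norm_pos_iff.2 (sub_ne_zero.2 hyc)
  rw [mem_sphere_iff_norm, radialPush, max_eq_left ((one_le_div hpos).2 hy), add_sub_cancel_left,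
    norm_smul, Real.norm_of_nonneg (div_nonneg (hpos.le.trans hy) hpos.le),
    div_mul_cancel₀ _ hpos.ne']

theorem isBounded_range_of_forall_notMem_norm_le {X F : Type*} [TopologicalSpace X]
    [SeminormedAddCommGroup F] {f : X → F} (hf : Continuous f) {K : Set X} (hK : IsCompact K)
    {C : ℝ} (hC : ∀ x ∉ K, ‖f x‖ ≤ C) : Bornology.IsBounded (Set.range f) := by
  refine ((hK.image hf).isBounded.union
    (isBounded_closedBall (x := (0 : F)) (r := C))).subset ?_
  rintro _ ⟨x, rfl⟩
  by_cases hx : x ∈ K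
  · exact .inl ⟨x, hx, rfl⟩
  · exact .inr (mem_closedBall_zero_iff.2 (hC x hx))

variable [FiniteDimensional ℝ E]

theorem dense_compl_image_sphere {P : E → E} (hP : Differentiable ℝ P) (c : E) {r : ℝ}
    (hr : r ≠ 0) : Dense (P '' sphere c r)ᶜ := by
  borelize E
  have hnull : Measure.addHaar (P '' sphere c r) = 0 :=
    addHaar_image_eq_zero_of_differentiableOn_of_addHaar_eq_zero _ hP.differentiableOn
      (Measure.addHaar_sphere_of_ne_zero _ c hr)
  exact Measure.dense_of_ae (measure_eq_zero_iff_ae_notMem.1 hnull)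

theorem exists_contDiff_dist_comp_lt_of_isClosedEmbedding {F : Type*} [NormedAddCommGroup F]
    [NormedSpace ℝ F] [FiniteDimensional ℝ F] {f : F → E} (hf : IsClosedEmbedding f) {ε : ℝ}
    (hε : 0 < ε) : ∃ P : E → F, ContDiff ℝ 1 P ∧ ∀ x, dist (P (f x)) x < ε := by
  have : TietzeExtension F := .of_tvs ℝ
  obtain ⟨G, hG⟩ := ContinuousMap.exists_extension' hf (ContinuousMap.id F)
  obtain ⟨P, hP, hPG, -⟩ := G.continuous.exists_contDiff_approx 1 (ε := fun _ => ε)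
    continuous_const fun _ => hε
  refine ⟨P, hP, fun x => ?_⟩
  have hGf : G (f x) = x := congrFun hG x
  simpa only [hGf] using hPG (f x)

theorem surjective_of_isClosedEmbedding {f : E → E} (hf : IsClosedEmbedding f) :
    Surjective f := by
  by_contra hsurj
  obtain ⟨c, hc⟩ : ∃ c, ∀ x, f x ≠ c := by simpa [Surjective] using hsurj
  have hfcont : Continuous f := hf.continuous
  obtain ⟨r, hr, hr0⟩ : ∃ r > 0, ‖f 0 - c‖ < r :=
    ⟨‖f 0 - c‖ + 1, by positivity, lt_add_one _⟩
  have hnear : ∀ᶠ x in 𝓝 0, ‖f x - c‖ < r :=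
    (hfcont.sub continuous_const).norm.continuousAt.eventually_lt_const hr0
  obtain ⟨δ, hδ, hδr⟩ := Metric.eventually_nhds_iff_ball.1 hnear
  obtain ⟨P, hP, hPf⟩ := exists_contDiff_dist_comp_lt_of_isClosedEmbedding hf (half_pos hδ)
  obtain ⟨v, hvP, hvδ⟩ := (dense_compl_image_sphere (hP.differentiable one_ne_zero) c
    hr.ne').exists_dist_lt 0 (half_pos hδ)
  -- Near `0` the map `f` stays inside the ball, so `g x` lies in `P '' sphere c r`, which avoids
  -- `v`; elsewhere `g x` is too close to `x` to equal `v`.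
  let g : E → E := fun x => P (radialPush c r (f x))
  have hg : Continuous g := hP.continuous.comp
    ((continuousOn_radialPush c r).comp_continuous hfcont hc)
  have hg_far {x : E} (hx : r ≤ ‖f x - c‖) : dist (g x) x < δ / 2 := by
    simpa only [g, radialPush_of_le hx] using hPf x
  have hg_ne : ∀ x, g x ≠ v := by
    rintro x rfl
    rcases le_total ‖f x - c‖ r with hx | hx
    · exact hvP ⟨_, radialPush_mem_sphere (hc x) hx, rfl⟩
    · have hxδ : dist x 0 < δ := by
        linarith [dist_triangle_left x 0 (g x), hg_far hx, dist_comm 0 (g x)]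
      exact (hδr x hxδ).not_ge hx
  have hbdd : Bornology.IsBounded (Set.range fun x => g x - x) := by
    refine isBounded_range_of_forall_notMem_norm_le (by fun_prop)
      (hf.isCompact_preimage (isCompact_closedBall c r)) (C := δ / 2) fun x hx => ?_
    rw [Set.mem_preimage, mem_closedBall_iff_norm, not_le] at hx
    exact (dist_eq_norm (g x) x).symm.trans_le (hg_far hx.le).le
  obtain ⟨x, hx⟩ := surjective_of_isBounded_range_sub_id hg hbdd v
  exact hg_ne x hx

theorem surjective_of_injective_of_tendsto_norm_atTop {f : E → E} (hf : Continuous f)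
    (hinj : Injective f) (hlim : Tendsto (fun x => ‖f x‖) (cocompact E) atTop) :
    Surjective f := by
  have hproper : IsProperMap f := by
    rw [isProperMap_iff_tendsto_cocompact, ← cobounded_eq_cocompact (α := E)]
    refine ⟨hf, tendsto_norm_atTop_iff_cobounded.1 ?_⟩
    rwa [cobounded_eq_cocompact]
  exact surjective_of_isClosedEmbedding
    (.of_continuous_injective_isClosedMap hf hinj hproper.isClosedMap)

end ClosedEmbedding

section Homogeneous

open Filter Metric

variable {E F : Type*} [NormedAddCommGroup E] [NormedAddCommGroup F]

theorem tendsto_norm_cocompact_atTop_of_homogeneous [NormedSpace ℝ E] [NormedSpace ℝ F]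
    [FiniteDimensional ℝ E] {f : E → F} (hf : Continuous f) {k : ℕ} (hk : k ≠ 0)
    (hhom : ∀ t : ℝ, 0 < t → ∀ x, f (t • x) = t ^ k • f x) (hzero : ∀ x, f x = 0 → x = 0) :
    Tendsto (fun x => ‖f x‖) (cocompact E) atTop := by
  obtain ⟨c, hc, hc_le⟩ := (isCompact_sphere (0 : E) 1).exists_forall_le' (f := fun y => ‖f y‖)
    (by fun_prop) fun y hy =>
      norm_pos_iff.2 (mt (hzero y) (ne_zero_of_mem_unit_sphere ⟨y, hy⟩))
  have hlower {x : E} (hx : 0 < ‖x‖) : c * ‖x‖ ^ k ≤ ‖f x‖ := by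
    have hsphere : ‖x‖⁻¹ • x ∈ sphere (0 : E) 1 := by simp [norm_smul, hx.ne']
    calc c * ‖x‖ ^ k ≤ ‖f (‖x‖⁻¹ • x)‖ * ‖x‖ ^ k := by gcongr; exact hc_le _ hsphere
      _ = ‖‖x‖ ^ k • f (‖x‖⁻¹ • x)‖ := by rw [norm_smul, norm_pow, norm_norm, mul_comm]
      _ = ‖f x‖ := by rw [← hhom _ hx, smul_inv_smul₀ hx.ne']
  have hnorm : Tendsto (fun x : E => ‖x‖) (cocompact E) atTop := tendsto_norm_cocompact_atTop
  refine tendsto_atTop_mono' _ ?_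
    (((tendsto_pow_atTop hk).comp hnorm).const_mul_atTop hc)
  exact (hnorm.eventually_gt_atTop 0).mono fun x hx => hlower hx

theorem tendsto_norm_atTop_of_norm_sub_le {α : Type*} {l : Filter α} {f g : α → F} {C : ℝ}
    (hf : Tendsto (fun x => ‖f x‖) l atTop) (hfg : ∀ x, ‖f x - g x‖ ≤ C) :
    Tendsto (fun x => ‖g x‖) l atTop := by
  refine tendsto_atTop_mono (fun x => ?_) (tendsto_atTop_add_const_right l (-C) hf)
  linarith [norm_sub_norm_le (f x) (g x), hfg x]

end Homogeneous

section VerticalComplementarity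

open Filter Function

theorem min_eq_zero_iff_nonneg_and_mul_eq_zero {R : Type*} [Ring R] [LinearOrder R]
    [IsStrictOrderedRing R] {a b : R} : min a b = 0 ↔ 0 ≤ a ∧ 0 ≤ b ∧ a * b = 0 := by
  constructor
  · intro h
    refine ⟨h.symm.trans_le (min_le_left a b), h.symm.trans_le (min_le_right a b),
      mul_eq_zero.2 ?_⟩
    exact (min_choice a b).imp (·.symm.trans h) (·.symm.trans h)
  · rintro ⟨ha, hb, hab⟩
    rcases mul_eq_zero.1 hab with rfl | rfl
    · exact min_eq_left hb
    · exact min_eq_right ha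

theorem min_ne_min_of_mul_sub_pos {R : Type*} [Ring R] [LinearOrder R] [IsStrictOrderedRing R]
    {a a' b b' : R} (h : 0 < (a - a') * (b - b')) : min a b ≠ min a' b' := by
  rcases pos_and_pos_or_neg_and_neg_of_mul_pos h with ⟨ha, hb⟩ | ⟨ha, hb⟩
  · exact (min_lt_min (sub_pos.1 ha) (sub_pos.1 hb)).ne'
  · exact (min_lt_min (sub_neg.1 ha) (sub_neg.1 hb)).ne

variable {n k : ℕ} (A A1 A2 : Fin n → (Fin k → Fin n) → ℝ) (q1 q2 x : Fin n → ℝ)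

theorem continuous_tProd : Continuous (tProd A) := by
  unfold tProd
  fun_prop

theorem tProd_smul (t : ℝ) : tProd A (t • x) = t ^ k • tProd A x := by
  ext i
  simp only [tProd, Pi.smul_apply, smul_eq_mul, Finset.prod_mul_distrib, Finset.prod_const,
    Finset.card_univ, Fintype.card_fin, Finset.mul_sum, mul_left_comm]

/-- The natural residual of the vertical tensor complementarity problem, the componentwise minimum
of `q1 + A1 x^{m-1}` and `q2 + A2 x^{m-1}`; its zeros are the solutions. -/
noncomputable def vtcpResidual : Fin n → ℝ :=
  (q1 + tProd A1 x) ⊓ (q2 + tProd A2 x)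

theorem vtcpSol_iff_vtcpResidual_eq_zero :
    VTCPSol A1 A2 q1 q2 x ↔ vtcpResidual A1 A2 q1 q2 x = 0 := by
  simp only [VTCPSol, funext_iff, vtcpResidual, Pi.inf_apply, Pi.add_apply, Pi.zero_apply,
    min_eq_zero_iff_nonneg_and_mul_eq_zero, forall_and]
  refine and_congr_right fun h1 => and_congr_right fun h2 => ?_
  simpa only [Finset.mem_univ, true_imp_iff] using
    Finset.sum_eq_zero_iff_of_nonneg (s := Finset.univ) fun i _ => mul_nonneg (h1 i) (h2 i)

theorem continuous_vtcpResidual : Continuous (vtcpResidual A1 A2 q1 q2) :=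
  continuous_pi fun i =>
    (continuous_const.add ((continuous_apply i).comp (continuous_tProd A1))).min
      (continuous_const.add ((continuous_apply i).comp (continuous_tProd A2)))

theorem vtcpResidual_zero_smul {t : ℝ} (ht : 0 ≤ t) :
    vtcpResidual A1 A2 0 0 (t • x) = t ^ k • vtcpResidual A1 A2 0 0 x := by
  ext i
  simp only [vtcpResidual, zero_add, tProd_smul, Pi.inf_apply, Pi.smul_apply, smul_eq_mul,
    mul_min_of_nonneg _ _ (pow_nonneg ht k)]

theorem norm_vtcpResidual_zero_sub_le :
    ‖vtcpResidual A1 A2 0 0 x - vtcpResidual A1 A2 q1 q2 x‖ ≤ ‖q1‖ + ‖q2‖ := by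
  refine (pi_norm_le_iff_of_nonneg (by positivity)).2 fun i => ?_
  refine (norm_inf_sub_inf_le_add_norm _ _ _ _).trans (add_le_add ?_ ?_)
  · simpa using norm_le_pi_norm q1 i
  · simpa using norm_le_pi_norm q2 i

variable {A1 A2}

theorem StrongVP.injective_vtcpResidual (h : StrongVP A1 A2) :
    Injective (vtcpResidual A1 A2 q1 q2) := by
  refine injective_iff_pairwise_ne.2 fun x y hxy heq => ?_
  obtain ⟨i, hi⟩ := h x y hxy
  refine min_ne_min_of_mul_sub_pos ?_ (congrFun heq i)
  simpa only [Pi.add_apply, add_sub_add_left_eq_sub] using hi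

theorem StrongVP.tendsto_norm_vtcpResidual (h : StrongVP A1 A2) (hk : k ≠ 0) :
    Tendsto (fun x => ‖vtcpResidual A1 A2 q1 q2 x‖) (cocompact (Fin n → ℝ)) atTop := by
  have hzero : vtcpResidual A1 A2 0 0 0 = 0 := by
    simpa [hk] using vtcpResidual_zero_smul A1 A2 0 le_rfl
  have hlim := tendsto_norm_cocompact_atTop_of_homogeneous (continuous_vtcpResidual A1 A2 0 0) hk
    (fun t ht x => vtcpResidual_zero_smul A1 A2 x ht.le)
    fun x hx => h.injective_vtcpResidual 0 0 (hx.trans hzero.symm)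
  exact tendsto_norm_atTop_of_norm_sub_le hlim (norm_vtcpResidual_zero_sub_le A1 A2 q1 q2)

theorem StrongVP.bijective_vtcpResidual (h : StrongVP A1 A2) (hk : k ≠ 0) :
    Bijective (vtcpResidual A1 A2 q1 q2) :=
  ⟨h.injective_vtcpResidual q1 q2,
    surjective_of_injective_of_tendsto_norm_atTop (continuous_vtcpResidual A1 A2 q1 q2)
      (h.injective_vtcpResidual q1 q2) (h.tendsto_norm_vtcpResidual q1 q2 hk)⟩

end VerticalComplementarity

theorem stmt_14_general {n k : ℕ} (hk : k ≠ 0) (A1 A2 : Fin n → (Fin k → Fin n) → ℝ)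
    (hSVP : StrongVP A1 A2) (q1 q2 : Fin n → ℝ) : ∃! x : Fin n → ℝ, VTCPSol A1 A2 q1 q2 x := by
  simpa only [vtcpSol_iff_vtcpResidual_eq_zero] using
    (hSVP.bijective_vtcpResidual q1 q2 hk).existsUnique 0

/-- If `m > 2`, `{A1, A2}` is of type strong VP and `A2` is an R-tensor, then the VTCP
has a unique solution for all `q1, q2`. -/
theorem stmt_14 {m n : ℕ} (hm : 2 < m) (hn : 1 ≤ n)
    (A1 A2 : Fin n → (Fin (m - 1) → Fin n) → ℝ)
    (hSVP : StrongVP A1 A2) (hR : RTensor A2) :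
    ∀ q1 q2 : Fin n → ℝ, ∃! x : Fin n → ℝ, VTCPSol A1 A2 q1 q2 x :=
  fun q1 q2 => stmt_14_general (by omega) A1 A2 hSVP q1 q2
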